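/- arXiv:math/9811184 — 4 statements merged into one kernel-verified Lean document; each statement's English description precedes it below -/
import Mathlib

section
/- (Lemma 1.) Let θ : ℝ² → ℝ be measurable with θ ∈ L^∞(ℝ²) ∩ L²(ℝ²). Let p, q ∈ ℝ² with τ := |p − q| satisfying 0 < τ ≤ 1/2. Then the function y ↦ θ(y)(1/|y − p| − 1/|y − q|) is absolutely integrable on ℝ², and |∫_{ℝ²} θ(y)(1/|y − p| − 1/|y − q|) dy| ≤ K₁ τ log(1/τ), where K₁ is a constant depending only on ‖θ‖_{L^∞} and ‖θ‖_{L²}. -/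
/-!
Put `d = dim E`, `τ = ‖p - q‖` and let `r` be the distance from `y` to the nearer of `p` and `q`.
The kernel difference is at most `r⁻⁽ᵈ⁻¹⁾`, and by Bernoulli's inequality at most
`(d - 1) τ r⁻ᵈ`. For `r ≤ 1` bound `θ` by its supremum: the first estimate integrates to a multiple
of `τ` over `r ≤ τ`, the second to a multiple of `τ log (1 / τ)` over `τ < r ≤ 1`. For `r > 1` the
second estimate is square integrable, so pairing it with `θ ∈ L²` costs only a multiple of `τ`.
-/

open MeasureTheory Set

noncomputable section

/-- Euclidean norm on `ℝ²`. -/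
def e2 (y : ℝ × ℝ) : ℝ := Real.sqrt (y.1 ^ 2 + y.2 ^ 2)

open Module Metric

theorem inv_pow_sub_inv_pow_le (n : ℕ) {a b : ℝ} (ha : 0 < a) (hab : a ≤ b) :
    (a ^ n)⁻¹ - (b ^ n)⁻¹ ≤ n * (b - a) * (a ^ (n + 1))⁻¹ := by
  have hb : 0 < b := ha.trans_le hab
  have bernoulli : 1 - n * ((b - a) / b) ≤ (a / b) ^ n := by
    have h := one_add_mul_le_pow (a := a / b - 1) (by have := div_pos ha hb; linarith) n
    have hdiv : (b - a) / b = 1 - a / b := by rw [sub_div, div_self hb.ne']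
    rw [add_sub_cancel] at h
    rw [hdiv]
    linarith
  calc (a ^ n)⁻¹ - (b ^ n)⁻¹ = (1 - (a / b) ^ n) * (a ^ n)⁻¹ := by
        rw [div_pow]
        field_simp
    _ ≤ (n * ((b - a) / a)) * (a ^ n)⁻¹ := by
        have : (b - a) / b ≤ (b - a) / a :=
          div_le_div_of_nonneg_left (sub_nonneg.2 hab) ha hab
        gcongr
        linarith [mul_le_mul_of_nonneg_left this n.cast_nonneg]
    _ = n * (b - a) * (a ^ (n + 1))⁻¹ := by
        rw [pow_succ]
        field_simp

/-- Radial majorant of `t * (r⁻ⁿ - s⁻ⁿ)` for `0 ≤ t ≤ A` and `r ≤ s ≤ r + τ`, up to the error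
`n * τ / 2 * t ^ 2` left over from the inequality of arithmetic and geometric means on `1 < r`.
It is applied with `n = d - 1` in dimension `d`. -/
def radialMajorant (n : ℕ) (A τ r : ℝ) : ℝ :=
  if r ≤ τ then A * (r ^ n)⁻¹
  else if r ≤ 1 then n * A * τ * (r ^ (n + 1))⁻¹
  else n * τ / 2 * (r ^ (n + 1))⁻¹ ^ 2

section Radial

variable {n : ℕ} {A τ : ℝ}

theorem radialMajorant_nonneg {r : ℝ} (hA : 0 ≤ A) (hτ : 0 ≤ τ) (hr : 0 ≤ r) :
    0 ≤ radialMajorant n A τ r := by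
  unfold radialMajorant
  split_ifs <;> positivity

theorem mul_inv_pow_sub_inv_pow_le_radialMajorant {t a b : ℝ} (ht : 0 ≤ t) (htA : t ≤ A)
    (ha : 0 < a) (hab : a ≤ b) (hb : b - a ≤ τ) :
    t * ((a ^ n)⁻¹ - (b ^ n)⁻¹) ≤ radialMajorant n A τ a + n * τ / 2 * t ^ 2 := by
  have hτ : 0 ≤ τ := (sub_nonneg.2 hab).trans hb
  have : 0 ≤ A := ht.trans htA
  have size : (a ^ n)⁻¹ - (b ^ n)⁻¹ ≤ (a ^ n)⁻¹ :=
    sub_le_self _ (inv_nonneg.2 (pow_nonneg (ha.le.trans hab) n))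
  have difference : (a ^ n)⁻¹ - (b ^ n)⁻¹ ≤ n * τ * (a ^ (n + 1))⁻¹ :=
    (inv_pow_sub_inv_pow_le n ha hab).trans (by gcongr)
  have error_nonneg : 0 ≤ n * τ / 2 * t ^ 2 := by positivity
  unfold radialMajorant
  split_ifs
  · calc t * ((a ^ n)⁻¹ - (b ^ n)⁻¹) ≤ t * (a ^ n)⁻¹ := by gcongr
      _ ≤ A * (a ^ n)⁻¹ := by gcongr
      _ ≤ _ := le_add_of_nonneg_right error_nonneg
  · calc t * ((a ^ n)⁻¹ - (b ^ n)⁻¹) ≤ t * (n * τ * (a ^ (n + 1))⁻¹) := by gcongr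
      _ ≤ A * (n * τ * (a ^ (n + 1))⁻¹) := by gcongr
      _ = n * A * τ * (a ^ (n + 1))⁻¹ := by ring
      _ ≤ _ := le_add_of_nonneg_right error_nonneg
  · calc t * ((a ^ n)⁻¹ - (b ^ n)⁻¹) ≤ t * (n * τ * (a ^ (n + 1))⁻¹) := by gcongr
      _ = n * τ / 2 * (2 * (a ^ (n + 1))⁻¹ * t) := by ring
      _ ≤ n * τ / 2 * ((a ^ (n + 1))⁻¹ ^ 2 + t ^ 2) := by
        gcongr
        exact two_mul_le_add_sq _ _
      _ = _ := mul_add _ _ _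

theorem mul_abs_inv_pow_sub_inv_pow_le_radialMajorant {t a b : ℝ} (ht : 0 ≤ t) (htA : t ≤ A)
    (ha : 0 < a) (hb : 0 < b) (hab : |a - b| ≤ τ) :
    t * |(a ^ n)⁻¹ - (b ^ n)⁻¹| ≤
      radialMajorant n A τ a + radialMajorant n A τ b + n * τ / 2 * t ^ 2 := by
  wlog h : a ≤ b generalizing a b
  · rw [abs_sub_comm, add_comm (radialMajorant n A τ a)]
    exact this hb ha (by rwa [abs_sub_comm]) (le_of_not_ge h)
  have hτ : 0 ≤ τ := (abs_nonneg _).trans hab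
  rw [abs_of_nonneg (sub_nonneg.2 (by gcongr))]
  linarith [mul_inv_pow_sub_inv_pow_le_radialMajorant (n := n) ht htA ha h
      (by linarith [(abs_le.1 hab).1]),
    radialMajorant_nonneg (n := n) (ht.trans htA) hτ hb.le]

theorem pow_mul_radialMajorant_eqOn_Ioc_zero :
    EqOn (fun r ↦ r ^ n * radialMajorant n A τ r) (fun _ ↦ A) (Ioc 0 τ) := by
  intro r ⟨hr, hrτ⟩
  simp only [radialMajorant, if_pos hrτ]
  field_simp

theorem pow_mul_radialMajorant_eqOn_Ioc_one (hτ : 0 ≤ τ) :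
    EqOn (fun r ↦ r ^ n * radialMajorant n A τ r) (fun r ↦ n * A * τ * r⁻¹) (Ioc τ 1) := by
  intro r ⟨hτr, hr⟩
  have : 0 < r := hτ.trans_lt hτr
  simp only [radialMajorant, if_neg hτr.not_ge, if_pos hr, pow_succ]
  field_simp

theorem pow_mul_radialMajorant_eqOn_Ioi_one (hτ : τ ≤ 1) :
    EqOn (fun r ↦ r ^ n * radialMajorant n A τ r)
      (fun r ↦ n * τ / 2 * r ^ (-(n + 2) : ℝ)) (Ioi 1) := by
  intro r hr
  have hr0 : 0 < r := one_pos.trans hr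
  have hpow : r ^ (-(n + 2) : ℝ) = (r ^ (n + 2))⁻¹ := by
    rw [Real.rpow_neg hr0.le]
    norm_cast
  simp only [radialMajorant, if_neg (hτ.trans_lt hr).not_ge, if_neg (mem_Ioi.1 hr).not_ge, hpow]
  field_simp
  ring

theorem integrableOn_pow_mul_radialMajorant_Ioc_zero :
    IntegrableOn (fun r ↦ r ^ n * radialMajorant n A τ r) (Ioc 0 τ) := by
  rw [integrableOn_congr_fun pow_mul_radialMajorant_eqOn_Ioc_zero measurableSet_Ioc]
  exact integrableOn_const (by simp)

theorem integrableOn_pow_mul_radialMajorant_Ioc_one (hτ : 0 < τ) :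
    IntegrableOn (fun r ↦ r ^ n * radialMajorant n A τ r) (Ioc τ 1) := by
  rw [integrableOn_congr_fun (pow_mul_radialMajorant_eqOn_Ioc_one hτ.le) measurableSet_Ioc]
  have inv_integrable : IntervalIntegrable (fun r : ℝ ↦ r⁻¹) volume τ 1 :=
    intervalIntegrable_inv_iff.2 (Or.inr (notMem_uIcc_of_lt hτ one_pos))
  exact inv_integrable.1.const_mul _

theorem integrableOn_pow_mul_radialMajorant_Ioi_one (hτ : τ ≤ 1) :
    IntegrableOn (fun r ↦ r ^ n * radialMajorant n A τ r) (Ioi 1) := by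
  rw [integrableOn_congr_fun (pow_mul_radialMajorant_eqOn_Ioi_one hτ) measurableSet_Ioi]
  have : (-(n + 2) : ℝ) < -1 := by linarith [n.cast_nonneg (α := ℝ)]
  exact (integrableOn_Ioi_rpow_of_lt this one_pos).const_mul _

theorem setIntegral_Ioc_zero_pow_mul_radialMajorant (hτ : 0 ≤ τ) :
    ∫ r in Ioc 0 τ, r ^ n * radialMajorant n A τ r = A * τ := by
  rw [setIntegral_congr_fun measurableSet_Ioc pow_mul_radialMajorant_eqOn_Ioc_zero,
    setIntegral_const, Real.volume_real_Ioc_of_le hτ, sub_zero, smul_eq_mul, mul_comm]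

theorem setIntegral_Ioc_one_pow_mul_radialMajorant (hτ : 0 < τ) (hτ1 : τ ≤ 1) :
    ∫ r in Ioc τ 1, r ^ n * radialMajorant n A τ r = n * A * τ * Real.log (1 / τ) := by
  rw [setIntegral_congr_fun measurableSet_Ioc (pow_mul_radialMajorant_eqOn_Ioc_one hτ.le),
    integral_const_mul, ← intervalIntegral.integral_of_le hτ1, integral_inv_of_pos hτ one_pos]

theorem setIntegral_Ioi_one_pow_mul_radialMajorant (hτ : τ ≤ 1) :
    ∫ r in Ioi 1, r ^ n * radialMajorant n A τ r = n * τ / (2 * (n + 1)) := by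
  have : (-(n + 2) : ℝ) < -1 := by linarith [n.cast_nonneg (α := ℝ)]
  rw [setIntegral_congr_fun measurableSet_Ioi (pow_mul_radialMajorant_eqOn_Ioi_one hτ),
    integral_const_mul, integral_Ioi_rpow_of_lt this one_pos, Real.one_rpow,
    show (-(n + 2) + 1 : ℝ) = -(n + 1) by ring, neg_div_neg_eq, div_mul_div_comm, mul_one]

theorem integrableOn_pow_mul_radialMajorant (hτ : 0 < τ) (hτ1 : τ ≤ 1) :
    IntegrableOn (fun r ↦ r ^ n * radialMajorant n A τ r) (Ioi 0) := by
  rw [← Ioc_union_Ioi_eq_Ioi hτ.le, ← Ioc_union_Ioi_eq_Ioi hτ1]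
  exact integrableOn_pow_mul_radialMajorant_Ioc_zero.union
    ((integrableOn_pow_mul_radialMajorant_Ioc_one hτ).union
      (integrableOn_pow_mul_radialMajorant_Ioi_one hτ1))

theorem integral_pow_mul_radialMajorant (hτ : 0 < τ) (hτ1 : τ ≤ 1) :
    ∫ r in Ioi 0, r ^ n * radialMajorant n A τ r =
      A * τ + n * A * τ * Real.log (1 / τ) + n * τ / (2 * (n + 1)) := by
  have integrable := integrableOn_pow_mul_radialMajorant (n := n) (A := A) hτ hτ1
  rw [← Ioc_union_Ioi_eq_Ioi hτ.le,
    setIntegral_union (Ioc_disjoint_Ioi le_rfl) measurableSet_Ioi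
      (integrable.mono_set Ioc_subset_Ioi_self) (integrable.mono_set (Ioi_subset_Ioi hτ.le)),
    ← Ioc_union_Ioi_eq_Ioi hτ1,
    setIntegral_union (Ioc_disjoint_Ioi le_rfl) measurableSet_Ioi
      (integrableOn_pow_mul_radialMajorant_Ioc_one hτ)
      (integrableOn_pow_mul_radialMajorant_Ioi_one hτ1),
    setIntegral_Ioc_zero_pow_mul_radialMajorant hτ.le,
    setIntegral_Ioc_one_pow_mul_radialMajorant hτ hτ1,
    setIntegral_Ioi_one_pow_mul_radialMajorant hτ1, add_assoc]

end Radial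

section Haar

variable {E F : Type*} [NormedAddCommGroup E] [NormedSpace ℝ E] [FiniteDimensional ℝ E]
  [MeasurableSpace E] [BorelSpace E] [NormedAddCommGroup F] [NormedSpace ℝ F]
  (μ : Measure E) [μ.IsAddHaarMeasure] {n : ℕ} {A τ : ℝ} {θ : E → F} {p q : E}

theorem integrable_radialMajorant_norm_sub (hn : finrank ℝ E = n + 1) (hτ : 0 < τ) (hτ1 : τ ≤ 1)
    (p : E) : Integrable (fun y ↦ radialMajorant n A τ ‖y - p‖) μ := by
  have : Nontrivial E := nontrivial_of_finrank_pos (R := ℝ) (by lia)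
  refine ((integrable_fun_norm_addHaar μ).2 ?_).comp_sub_right p
  rw [hn]
  exact integrableOn_pow_mul_radialMajorant hτ hτ1

theorem integral_radialMajorant_norm_sub (hn : finrank ℝ E = n + 1) (hτ : 0 < τ) (hτ1 : τ ≤ 1)
    (p : E) :
    ∫ y, radialMajorant n A τ ‖y - p‖ ∂μ = (n + 1) * μ.real (ball 0 1) *
      (A * τ + n * A * τ * Real.log (1 / τ) + n * τ / (2 * (n + 1))) := by
  have : Nontrivial E := nontrivial_of_finrank_pos (R := ℝ) (by lia)
  rw [integral_sub_right_eq_self (fun y ↦ radialMajorant n A τ ‖y‖) p,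
    integral_fun_norm_addHaar μ (radialMajorant n A τ), hn, Nat.add_sub_cancel]
  simp only [smul_eq_mul, nsmul_eq_mul, integral_pow_mul_radialMajorant hτ hτ1, mul_assoc,
    Nat.cast_add_one]

theorem ae_norm_inv_pow_sub_inv_pow_smul_le [Nontrivial E] (n : ℕ)
    (hA : ∀ᵐ y ∂μ, ‖θ y‖ ≤ A) (p q : E) :
    ∀ᵐ y ∂μ, ‖((‖y - p‖ ^ n)⁻¹ - (‖y - q‖ ^ n)⁻¹) • θ y‖ ≤
      radialMajorant n A ‖p - q‖ ‖y - p‖ + radialMajorant n A ‖p - q‖ ‖y - q‖ +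
        n * ‖p - q‖ / 2 * ‖θ y‖ ^ 2 := by
  filter_upwards [hA, Measure.ae_ne μ p, Measure.ae_ne μ q] with y hy hyp hyq
  rw [norm_smul, mul_comm, Real.norm_eq_abs]
  refine mul_abs_inv_pow_sub_inv_pow_le_radialMajorant (norm_nonneg _) hy
    (norm_sub_pos_iff.2 hyp) (norm_sub_pos_iff.2 hyq) ?_
  calc |‖y - p‖ - ‖y - q‖| ≤ ‖(y - p) - (y - q)‖ := abs_norm_sub_norm_le _ _
    _ = ‖p - q‖ := by rw [sub_sub_sub_cancel_left, norm_sub_rev]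

theorem integrable_inv_pow_sub_inv_pow_smul (hn : finrank ℝ E = n + 1) (hθ : MemLp θ 2 μ)
    (hA : ∀ᵐ y ∂μ, ‖θ y‖ ≤ A) (hpq : 0 < ‖p - q‖) (hpq1 : ‖p - q‖ ≤ 1) :
    Integrable (fun y ↦ ((‖y - p‖ ^ n)⁻¹ - (‖y - q‖ ^ n)⁻¹) • θ y) μ := by
  have : Nontrivial E := nontrivial_of_finrank_pos (R := ℝ) (by lia)
  have kernel_measurable : Measurable fun y ↦ (‖y - p‖ ^ n)⁻¹ - (‖y - q‖ ^ n)⁻¹ := by fun_prop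
  exact (((integrable_radialMajorant_norm_sub μ hn hpq hpq1 p).add
    (integrable_radialMajorant_norm_sub μ hn hpq hpq1 q)).add
    ((hθ.integrable_norm_pow two_ne_zero).const_mul _)).mono'
      (kernel_measurable.aestronglyMeasurable.smul hθ.1)
      (ae_norm_inv_pow_sub_inv_pow_smul_le μ n hA p q)

theorem norm_integral_inv_pow_sub_inv_pow_smul_le (hn : finrank ℝ E = n + 1) (hθ : MemLp θ 2 μ)
    (hA : ∀ᵐ y ∂μ, ‖θ y‖ ≤ A) (hpq : 0 < ‖p - q‖) (hpq1 : ‖p - q‖ ≤ 1) :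
    ‖∫ y, ((‖y - p‖ ^ n)⁻¹ - (‖y - q‖ ^ n)⁻¹) • θ y ∂μ‖ ≤
      2 * ((n + 1) * μ.real (ball 0 1) * (A * ‖p - q‖ +
        n * A * ‖p - q‖ * Real.log (1 / ‖p - q‖) + n * ‖p - q‖ / (2 * (n + 1)))) +
      n * ‖p - q‖ / 2 * ∫ y, ‖θ y‖ ^ 2 ∂μ := by
  have : Nontrivial E := nontrivial_of_finrank_pos (R := ℝ) (by lia)
  have int_p := integrable_radialMajorant_norm_sub (A := A) μ hn hpq hpq1 p
  have int_q := integrable_radialMajorant_norm_sub (A := A) μ hn hpq hpq1 q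
  have int_sq := (hθ.integrable_norm_pow two_ne_zero).const_mul (n * ‖p - q‖ / 2)
  refine (norm_integral_le_of_norm_le ((int_p.add int_q).add int_sq)
    (ae_norm_inv_pow_sub_inv_pow_smul_le μ n hA p q)).trans_eq ?_
  rw [integral_add' (int_p.add int_q) int_sq, integral_add' int_p int_q, integral_const_mul,
    integral_radialMajorant_norm_sub μ hn hpq hpq1, integral_radialMajorant_norm_sub μ hn hpq hpq1,
    ← two_mul]

-- In dimension `n + 1 ≥ 2` the kernel `‖y‖⁻ⁿ` is that of `(-Δ)^(-1/2)` up to a constant.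
theorem stream_function_difference_bound_general (hn : finrank ℝ E = n + 1) (A B : ℝ) :
    ∃ K₁ : ℝ, 0 < K₁ ∧
      ∀ θ : E → F, MemLp θ 2 μ →
        (∀ᵐ y ∂μ, ‖θ y‖ ≤ A) →
        Real.sqrt (∫ y, ‖θ y‖ ^ 2 ∂μ) ≤ B →
        ∀ p q : E, 0 < ‖p - q‖ → ‖p - q‖ ≤ 1 / 2 →
          Integrable (fun y ↦ ((‖y - p‖ ^ n)⁻¹ - (‖y - q‖ ^ n)⁻¹) • θ y) μ ∧
          ‖∫ y, ((‖y - p‖ ^ n)⁻¹ - (‖y - q‖ ^ n)⁻¹) • θ y ∂μ‖ ≤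
            K₁ * ‖p - q‖ * Real.log (1 / ‖p - q‖) := by
  set C : ℝ := (n + 1) * μ.real (ball 0 1)
  set c₀ : ℝ := 2 * C * (|A| + n / (2 * (n + 1))) + n * B ^ 2 / 2 with hc₀
  set c₁ : ℝ := 2 * C * (n * |A|) with hc₁
  have log_two_pos : 0 < Real.log 2 := Real.log_pos one_lt_two
  refine ⟨c₁ + (c₀ + 1) / Real.log 2, by positivity, fun θ hθ hA hB p q hpq hpq2 ↦ ?_⟩
  have hpq1 : ‖p - q‖ ≤ 1 := by linarith
  refine ⟨integrable_inv_pow_sub_inv_pow_smul μ hn hθ hA hpq hpq1, ?_⟩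
  have hA' : ∀ᵐ y ∂μ, ‖θ y‖ ≤ |A| := hA.mono fun _ h ↦ h.trans (le_abs_self A)
  have l2_sq_le : ∫ y, ‖θ y‖ ^ 2 ∂μ ≤ B ^ 2 :=
    (Real.sqrt_le_left ((Real.sqrt_nonneg _).trans hB)).1 hB
  have one_le_log : 1 ≤ Real.log (1 / ‖p - q‖) / Real.log 2 := by
    rw [one_le_div log_two_pos]
    exact Real.log_le_log two_pos ((le_one_div two_pos hpq).2 hpq2)
  set τ := ‖p - q‖
  calc _ ≤ 2 * (C * (|A| * τ + n * |A| * τ * Real.log (1 / τ) + n * τ / (2 * (n + 1)))) +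
          n * τ / 2 * ∫ y, ‖θ y‖ ^ 2 ∂μ :=
        norm_integral_inv_pow_sub_inv_pow_smul_le μ hn hθ hA' hpq hpq1
    _ ≤ 2 * (C * (|A| * τ + n * |A| * τ * Real.log (1 / τ) + n * τ / (2 * (n + 1)))) +
          n * τ / 2 * B ^ 2 := by gcongr
    _ = c₁ * τ * Real.log (1 / τ) + c₀ * τ * 1 := by rw [hc₀, hc₁]; ring
    _ ≤ c₁ * τ * Real.log (1 / τ) + (c₀ + 1) * τ * (Real.log (1 / τ) / Real.log 2) := by
        gcongr
        linarith
    _ = _ := by ring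

end Haar

theorem e2_sub (y p : ℝ × ℝ) : e2 (y - p) = ‖WithLp.toLp 2 y - WithLp.toLp 2 p‖ := by
  simp [e2, WithLp.prod_norm_eq_of_L2]

/-- **Lemma 1** (Córdoba). Let `θ : ℝ² → ℝ` be measurable and in `L^∞ ∩ L²`, with
`‖θ‖_∞ ≤ A` and `‖θ‖_{L²} ≤ B`. Then there is a constant `K₁`, depending only on `A`
and `B`, such that for all `p, q ∈ ℝ²` with `τ = |p − q| ∈ (0, 1/2]`, the function
`y ↦ θ(y)(1/|y−p| − 1/|y−q|)` is absolutely integrable and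
`|∫ θ(y)(1/|y−p| − 1/|y−q|) dy| ≤ K₁ τ log(1/τ)`. -/
theorem stream_function_difference_bound (A B : ℝ) :
    ∃ K₁ : ℝ, 0 < K₁ ∧
      ∀ θ : ℝ × ℝ → ℝ, Measurable θ →
        (∀ y, |θ y| ≤ A) →
        Integrable (fun y => (θ y) ^ 2) →
        Real.sqrt (∫ y, (θ y) ^ 2) ≤ B →
        ∀ p q : ℝ × ℝ, 0 < e2 (p - q) → e2 (p - q) ≤ 1 / 2 →
          Integrable (fun y => θ y * ((e2 (y - p))⁻¹ - (e2 (y - q))⁻¹)) ∧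
          |∫ y, θ y * ((e2 (y - p))⁻¹ - (e2 (y - q))⁻¹)| ≤
            K₁ * e2 (p - q) * Real.log (1 / e2 (p - q)) := by
  have finrank_eq : finrank ℝ (WithLp 2 (ℝ × ℝ)) = 1 + 1 := by
    rw [(WithLp.linearEquiv 2 ℝ (ℝ × ℝ)).finrank_eq, finrank_prod, finrank_self]
  have toLp_preserving : MeasurePreserving (MeasurableEquiv.toLp 2 (ℝ × ℝ)) :=
    WithLp.volume_preserving_toLp ℝ ℝ
  obtain ⟨K₁, hK₁, bound⟩ :=
    stream_function_difference_bound_general (F := ℝ) volume finrank_eq A B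
  refine ⟨K₁, hK₁, fun θ hθ hA hθ2 hB p q hpq hpq2 ↦ ?_⟩
  have hL2 : MemLp θ 2 := (memLp_two_iff_integrable_sq hθ.aestronglyMeasurable).2 hθ2
  rw [e2_sub] at hpq hpq2
  have h := bound (θ ∘ WithLp.ofLp)
    (hL2.comp_measurePreserving (WithLp.volume_preserving_ofLp ℝ ℝ)) (.of_forall fun _ ↦ hA _)
    (by simpa [← toLp_preserving.integral_comp'] using hB) _ _ hpq hpq2
  rw [← toLp_preserving.integral_comp',
    ← toLp_preserving.integrable_comp_emb (MeasurableEquiv.measurableEmbedding _)] at h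
  simpa [e2_sub, mul_comm, Function.comp_def] using h

end
end

section
/- Let θ : ℝ² → ℝ be C¹ with θ ∈ L^∞(ℝ²) ∩ L²(ℝ²) ∩ L¹(ℝ²) and ∇θ bounded on ℝ². Then for each x ∈ ℝ² and each ε > 0 the integral ∫_{|y|>ε} y^⊥ θ(x+y)/|y|³ dy converges absolutely, the principal value u(x) := lim_{ε→0⁺} ∫_{|y|>ε} y^⊥ θ(x+y)/|y|³ dy exists, and there are constants C₁, C₂ depending only on ‖θ‖_{L^∞}, ‖θ‖_{L²} and ‖θ‖_{L¹} such that for every τ ∈ (0,1): |u(x)| ≤ C₁ τ ‖∇θ‖_{L^∞} + C₂ (1 + log(1/τ)). Here y^⊥ = (−y₂, y₁). -/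
open MeasureTheory Set Filter Topology

noncomputable section

/-- First standard basis vector of `ℝ²`. -/
def v1 : ℝ × ℝ := (1, 0)

/-- Second standard basis vector of `ℝ²`. -/
def v2 : ℝ × ℝ := (0, 1)

/-- Partial derivative of `f : ℝ² → ℝ` in the direction `v` at `x`. -/
def pd (f : ℝ × ℝ → ℝ) (v x : ℝ × ℝ) : ℝ := fderiv ℝ f x v

/-- Gradient `∇f = (∂f/∂x₁, ∂f/∂x₂)`. -/
def grad2 (f : ℝ × ℝ → ℝ) (x : ℝ × ℝ) : ℝ × ℝ := (pd f v1 x, pd f v2 x)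

/-- `y^⊥ = (−y₂, y₁)`. -/
def perp (y : ℝ × ℝ) : ℝ × ℝ := (-y.2, y.1)

/-!
Since `K(y) = y^⊥ / |y|³` is odd, subtracting the constant `θ(x)` on the ball `|y| ≤ τ` changes no
truncated integral. After the subtraction the integrand is at most `G / |y|` on that ball, hence
integrable, so the truncations converge, and the ball contributes at most `2π G τ` to the limit.
On the annulus `τ < |y| ≤ 1` the integrand is at most `A / |y|²`, which contributes
`2π A log (1 / τ)`, and on `|y| > 1` it is at most `|θ(x + y)|`, which contributes at most `‖θ‖₁`.
Only the oddness and the bound `|K(y)| ≤ |y|⁻²` of the kernel matter, and in dimension `d` the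
argument is the same for odd kernels with `|K(y)| ≤ C |y|⁻ᵈ`.
-/

section RadialIntegrals

open Module

variable {E F : Type*} [NormedAddCommGroup E] [NormedSpace ℝ E] [FiniteDimensional ℝ E]
  [Nontrivial E] [MeasurableSpace E] [BorelSpace E] (μ : Measure E) [μ.IsAddHaarMeasure]
  [NormedAddCommGroup F] [NormedSpace ℝ F]

lemma integrableOn_norm_preimage_fun_norm_iff {f : ℝ → F} {S : Set ℝ} (hS : MeasurableSet S) :
    IntegrableOn (fun y : E => f ‖y‖) (norm ⁻¹' S) μ ↔
      IntegrableOn (fun r : ℝ => r ^ (finrank ℝ E - 1) • f r) (Ioi 0 ∩ S) := by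
  rw [← integrable_indicator_iff (measurable_norm hS), inter_comm, IntegrableOn,
    ← Measure.restrict_restrict hS, ← IntegrableOn, ← integrable_indicator_iff hS,
    indicator_smul]
  exact integrable_fun_norm_addHaar μ (f := S.indicator f)

lemma setIntegral_norm_preimage_fun_norm (f : ℝ → F) {S : Set ℝ} (hS : MeasurableSet S) :
    ∫ y in norm ⁻¹' S, f ‖y‖ ∂μ =
      μ.toSphere.real univ • ∫ r in Ioi 0 ∩ S, r ^ (finrank ℝ E - 1) • f r := by
  rw [← integral_indicator (measurable_norm hS), ← setIntegral_indicator hS, indicator_smul,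
    Measure.toSphere_real_apply_univ, mul_smul, Nat.cast_smul_eq_nsmul]
  exact integral_fun_norm_addHaar μ (S.indicator f)

lemma integrableOn_norm_preimage_Iic_div_norm_pow (c τ : ℝ) :
    IntegrableOn (fun y : E => c / ‖y‖ ^ (finrank ℝ E - 1)) (norm ⁻¹' Iic τ) μ := by
  rw [integrableOn_norm_preimage_fun_norm_iff μ (f := fun r => c / r ^ _) measurableSet_Iic,
    Ioi_inter_Iic]
  refine (integrableOn_const (C := c) measure_Ioc_lt_top.ne).congr_fun (fun r hr => ?_)
    measurableSet_Ioc
  exact (mul_div_cancel₀ c (pow_pos hr.1 _).ne').symm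

lemma setIntegral_norm_preimage_Iic_div_norm_pow (c : ℝ) {τ : ℝ} (hτ : 0 ≤ τ) :
    ∫ y in norm ⁻¹' Iic τ, c / ‖y‖ ^ (finrank ℝ E - 1) ∂μ = μ.toSphere.real univ * (c * τ) := by
  have hr : ∀ r ∈ Ioc 0 τ, r ^ (finrank ℝ E - 1) * (c / r ^ (finrank ℝ E - 1)) = c := fun r hr =>
    mul_div_cancel₀ c (pow_pos hr.1 _).ne'
  rw [setIntegral_norm_preimage_fun_norm μ (fun r => c / r ^ _) measurableSet_Iic, Ioi_inter_Iic]
  simp only [smul_eq_mul]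
  rw [setIntegral_congr_fun measurableSet_Ioc hr]
  simp [hτ, mul_comm]

lemma integrableOn_norm_preimage_Ioc_div_norm_pow (c : ℝ) {τ : ℝ} (hτ : 0 < τ) (R : ℝ) :
    IntegrableOn (fun y : E => c / ‖y‖ ^ finrank ℝ E) (norm ⁻¹' Ioc τ R) μ := by
  rw [integrableOn_norm_preimage_fun_norm_iff μ (f := fun r => c / r ^ _) measurableSet_Ioc]
  have hcont : ContinuousOn (fun r : ℝ => r ^ (finrank ℝ E - 1) • (c / r ^ finrank ℝ E))
      (Icc τ R) :=
    (continuousOn_pow _).smul <| continuousOn_const.div (continuousOn_pow _) fun r hr =>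
      (pow_pos (hτ.trans_le hr.1) _).ne'
  exact hcont.integrableOn_Icc.mono_set (inter_subset_right.trans Ioc_subset_Icc_self)

lemma setIntegral_norm_preimage_Ioc_div_norm_pow (c : ℝ) {τ R : ℝ} (hτ : 0 < τ) (hR : τ ≤ R) :
    ∫ y in norm ⁻¹' Ioc τ R, c / ‖y‖ ^ finrank ℝ E ∂μ =
      μ.toSphere.real univ * (c * Real.log (R / τ)) := by
  have hjacobian : ∀ r ∈ Ioc τ R, r ^ (finrank ℝ E - 1) • (c / r ^ finrank ℝ E) = c * r⁻¹ := by
    intro r hr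
    have hr0 : r ≠ 0 := (hτ.trans hr.1).ne'
    rw [smul_eq_mul, ← pow_sub_one_mul finrank_pos.ne' r]
    field_simp
  have hpos : Ioi 0 ∩ Ioc τ R = Ioc τ R :=
    inter_eq_right.2 fun r hr => hτ.trans hr.1
  rw [setIntegral_norm_preimage_fun_norm μ (fun r => c / r ^ _) measurableSet_Ioc, hpos,
    setIntegral_congr_fun measurableSet_Ioc hjacobian, integral_const_mul,
    ← intervalIntegral.integral_of_le hR, integral_inv_of_pos hτ (hτ.trans_le hR), smul_eq_mul]

end RadialIntegrals

section Truncation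

variable {E V : Type*} [NormedAddCommGroup E] [NormedAddCommGroup V] [NormedSpace ℝ V]

/-- The `ε`-truncation `∫_{|y| > ε} f(x + y) K(y) dμ(y)` of the singular integral of `f` at `x`
with kernel `K`; its limit as `ε → 0⁺` is the principal value. -/
def truncatedIntegral [MeasurableSpace E] (μ : Measure E) (K : E → V) (f : E → ℝ) (x : E)
    (ε : ℝ) : V :=
  ∫ y in norm ⁻¹' Ioi ε, f (x + y) • K y ∂μ

/-- The function `f` with its value at `x` subtracted on the closed ball of radius `τ` around `x`.
It has the same truncations at `x` as `f` against an odd kernel, but is small near `x`. -/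
def subLocalValue (f : E → ℝ) (x : E) (τ : ℝ) : E → ℝ :=
  f - (Metric.closedBall x τ).indicator fun _ => f x

lemma subLocalValue_of_norm_le (f : E → ℝ) (x : E) {y : E} {τ : ℝ} (hy : ‖y‖ ≤ τ) :
    subLocalValue f x τ (x + y) = f (x + y) - f x := by
  simp [subLocalValue, hy]

variable [MeasurableSpace E] [BorelSpace E] {μ : Measure E}

lemma aecover_norm_preimage_Ioi [NullSingletonClass μ] :
    AECover μ (𝓝[>] (0 : ℝ)) fun ε => (norm ⁻¹' Ioi ε : Set E) where
  ae_eventually_mem := by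
    filter_upwards [compl_mem_ae_iff.2 (measure_singleton (0 : E))] with y hy
    exact mem_nhdsWithin_of_mem_nhds (Iio_mem_nhds (norm_pos_iff.2 hy))
  measurableSet _ := measurable_norm measurableSet_Ioi

lemma setIntegral_norm_preimage_eq_zero_of_odd [μ.IsNegInvariant]
    {K : E → V} (hK : Function.Odd K) {S : Set ℝ} (hS : MeasurableSet S) :
    ∫ y in norm ⁻¹' S, K y ∂μ = 0 := by
  have hodd : ∀ y, (norm ⁻¹' S).indicator K (-y) = -(norm ⁻¹' S).indicator K y := fun y => by
    by_cases hy : ‖y‖ ∈ S <;> simp [hy, hK y]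
  have : IsAddTorsionFree V := .of_isTorsionFree ℝ V
  rw [← integral_indicator (measurable_norm hS), ← self_eq_neg, ← integral_neg,
    ← integral_neg_eq_self]
  simp only [hodd]

lemma truncatedIntegral_indicator_closedBall [μ.IsNegInvariant] {K : E → V}
    (hK : Function.Odd K) (x : E) (τ c ε : ℝ) :
    truncatedIntegral μ K ((Metric.closedBall x τ).indicator fun _ => c) x ε = 0 := by
  have hradial : ∀ y, (Metric.closedBall x τ).indicator (fun _ => c) (x + y) • K y =
      (norm ⁻¹' Iic τ).indicator (c • K) y := fun y => by
    by_cases hy : ‖y‖ ≤ τ <;> simp [hy]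
  simp only [truncatedIntegral, hradial]
  rw [setIntegral_indicator (measurable_norm measurableSet_Iic), ← preimage_inter]
  simp only [Pi.smul_apply]
  rw [integral_smul, setIntegral_norm_preimage_eq_zero_of_odd hK
    (measurableSet_Ioi.inter measurableSet_Iic), smul_zero]

lemma integrable_indicator_closedBall [ProperSpace E] [IsFiniteMeasureOnCompacts μ]
    (x : E) (τ c : ℝ) : Integrable ((Metric.closedBall x τ).indicator fun _ => c) μ :=
  (integrable_indicator_iff measurableSet_closedBall).2 <|
    integrableOn_const (isCompact_closedBall x τ).measure_lt_top.ne

end Truncation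

open Module in
/-- Odd singular kernels of critical order on a `d`-dimensional space: `|K(y)| ≤ C / |y|ᵈ`, so that
`K` just fails to be integrable at the origin and only its oddness gives sense to a principal
value. For `1 ≤ d` the bound reads `‖K 0‖ ≤ C / 0 = 0` at the origin. -/
structure IsOddSingularKernel {E V : Type*} [NormedAddCommGroup E] [NormedSpace ℝ E]
    [MeasurableSpace E] [NormedAddCommGroup V] (μ : Measure E) (K : E → V) (C : ℝ) : Prop where
  aestronglyMeasurable : AEStronglyMeasurable K μ
  odd : Function.Odd K
  norm_le : ∀ y, ‖K y‖ ≤ C / ‖y‖ ^ finrank ℝ E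

namespace IsOddSingularKernel

open Module

variable {E V : Type*} [NormedAddCommGroup E] [NormedSpace ℝ E] [Nontrivial E] [MeasurableSpace E]
  [NormedAddCommGroup V] {μ : Measure E} {K : E → V} {C : ℝ} {f g : E → ℝ} {x : E} {A G ε τ R : ℝ}

lemma const_nonneg (hK : IsOddSingularKernel μ K C) : 0 ≤ C := by
  obtain ⟨y, hy⟩ := exists_ne (0 : E)
  have hpow : 0 < ‖y‖ ^ finrank ℝ E := pow_pos (norm_pos_iff.2 hy) _
  simpa using (le_div_iff₀ hpow).1 ((norm_nonneg _).trans (hK.norm_le y))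

lemma norm_le_of_le (hK : IsOddSingularKernel μ K C) {y : E} (hR : 0 < R) (hy : R ≤ ‖y‖) :
    ‖K y‖ ≤ C / R ^ finrank ℝ E :=
  (hK.norm_le y).trans <| div_le_div_of_nonneg_left hK.const_nonneg (pow_pos hR _) <|
    pow_le_pow_left₀ hR.le hy _

variable [NormedSpace ℝ V]

lemma norm_sub_smul_le (hK : IsOddSingularKernel μ K C) [FiniteDimensional ℝ E] {y : E}
    (hy : y ≠ 0) (hG : |f (x + y) - f x| ≤ G * ‖y‖) :
    ‖(f (x + y) - f x) • K y‖ ≤ G * C / ‖y‖ ^ (finrank ℝ E - 1) := by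
  have hy0 : ‖y‖ ≠ 0 := norm_ne_zero_iff.2 hy
  calc ‖(f (x + y) - f x) • K y‖ = |f (x + y) - f x| * ‖K y‖ := norm_smul _ _
    _ ≤ G * ‖y‖ * (C / ‖y‖ ^ finrank ℝ E) :=
      mul_le_mul hG (hK.norm_le y) (norm_nonneg _) ((abs_nonneg _).trans hG)
    _ = G * C / ‖y‖ ^ (finrank ℝ E - 1) := by
      rw [← pow_sub_one_mul finrank_pos.ne' ‖y‖]
      field_simp

section LeftInvariant

variable [BorelSpace E] [μ.IsAddLeftInvariant]

lemma integrableOn_smul (hK : IsOddSingularKernel μ K C) (hf : Integrable f μ) (x : E)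
    (hε : 0 < ε) : IntegrableOn (fun y => f (x + y) • K y) (norm ⁻¹' Ioi ε) μ :=
  (hf.comp_add_left x).integrableOn.smul_bdd _ hK.aestronglyMeasurable.restrict <|
    ae_restrict_of_forall_mem (measurable_norm measurableSet_Ioi) fun _ hy =>
      hK.norm_le_of_le hε (le_of_lt hy)

lemma norm_truncatedIntegral_le (hK : IsOddSingularKernel μ K C) (hf : Integrable f μ) (x : E)
    (hR : 0 < R) : ‖truncatedIntegral μ K f x R‖ ≤ C / R ^ finrank ℝ E * ∫ y, |f y| ∂μ := by
  have hbound : ∀ y ∈ norm ⁻¹' Ioi R,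
      ‖f (x + y) • K y‖ ≤ C / R ^ finrank ℝ E * |f (x + y)| := fun y hy => by
    rw [norm_smul, mul_comm, Real.norm_eq_abs]
    exact mul_le_mul_of_nonneg_right (hK.norm_le_of_le hR (le_of_lt hy)) (abs_nonneg _)
  have hint : Integrable (fun y => C / R ^ finrank ℝ E * |f (x + y)|) μ :=
    (hf.comp_add_left x).abs.const_mul _
  calc ‖truncatedIntegral μ K f x R‖
      ≤ ∫ y in norm ⁻¹' Ioi R, C / R ^ finrank ℝ E * |f (x + y)| ∂μ :=
        norm_integral_le_of_norm_le hint.integrableOn <|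
          ae_restrict_of_forall_mem (measurable_norm measurableSet_Ioi) hbound
    _ ≤ ∫ y, C / R ^ finrank ℝ E * |f (x + y)| ∂μ :=
        setIntegral_le_integral hint <| ae_of_all _ fun y =>
          mul_nonneg (div_nonneg hK.const_nonneg (pow_nonneg hR.le _)) (abs_nonneg _)
    _ = C / R ^ finrank ℝ E * ∫ y, |f y| ∂μ := by
        rw [integral_const_mul, integral_add_left_eq_self (fun y => |f y|) x]

lemma truncatedIntegral_sub (hK : IsOddSingularKernel μ K C) (hf : Integrable f μ)
    (hg : Integrable g μ) (x : E) (hε : 0 < ε) :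
    truncatedIntegral μ K (f - g) x ε =
      truncatedIntegral μ K f x ε - truncatedIntegral μ K g x ε := by
  simp only [truncatedIntegral, Pi.sub_apply, sub_smul]
  exact integral_sub (hK.integrableOn_smul hf x hε) (hK.integrableOn_smul hg x hε)

end LeftInvariant

variable [FiniteDimensional ℝ E] [BorelSpace E] [μ.IsAddHaarMeasure]

lemma norm_setIntegral_Ioc_le (hK : IsOddSingularKernel μ K C) (hA : ∀ᵐ y ∂μ, |f y| ≤ A) (x : E)
    (hτ : 0 < τ) (hR : τ ≤ R) :
    ‖∫ y in norm ⁻¹' Ioc τ R, f (x + y) • K y ∂μ‖ ≤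
      μ.toSphere.real univ * (A * C * Real.log (R / τ)) := by
  rw [← setIntegral_norm_preimage_Ioc_div_norm_pow μ _ hτ hR]
  refine norm_integral_le_of_norm_le (integrableOn_norm_preimage_Ioc_div_norm_pow μ _ hτ R)
    (ae_restrict_of_ae ?_)
  filter_upwards [(quasiMeasurePreserving_add_left μ x).ae hA] with y hy
  calc ‖f (x + y) • K y‖ = |f (x + y)| * ‖K y‖ := norm_smul _ _
    _ ≤ A * (C / ‖y‖ ^ finrank ℝ E) :=
      mul_le_mul hy (hK.norm_le y) (norm_nonneg _) ((abs_nonneg _).trans hy)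
    _ = A * C / ‖y‖ ^ finrank ℝ E := (mul_div_assoc _ _ _).symm

lemma norm_truncatedIntegral_le_log (hK : IsOddSingularKernel μ K C) (hf : Integrable f μ)
    (hA : ∀ᵐ y ∂μ, |f y| ≤ A) (x : E) (hτ : 0 < τ) (hR : τ ≤ R) :
    ‖truncatedIntegral μ K f x τ‖ ≤ μ.toSphere.real univ * (A * C * Real.log (R / τ)) +
      C / R ^ finrank ℝ E * ∫ y, |f y| ∂μ := by
  have hsplit : truncatedIntegral μ K f x τ =
      (∫ y in norm ⁻¹' Ioc τ R, f (x + y) • K y ∂μ) + truncatedIntegral μ K f x R := by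
    rw [truncatedIntegral, ← Ioc_union_Ioi_eq_Ioi hR, preimage_union]
    exact setIntegral_union (Ioc_disjoint_Ioi_same.preimage _)
      (measurable_norm measurableSet_Ioi)
      ((hK.integrableOn_smul hf x hτ).mono_set (preimage_mono Ioc_subset_Ioi_self))
      (hK.integrableOn_smul hf x (hτ.trans_le hR))
  rw [hsplit]
  exact norm_add_le_of_le (hK.norm_setIntegral_Ioc_le hA x hτ hR)
    (hK.norm_truncatedIntegral_le hf x (hτ.trans_le hR))

lemma truncatedIntegral_subLocalValue (hK : IsOddSingularKernel μ K C) (hf : Integrable f μ)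
    (x : E) (τ : ℝ) (hε : 0 < ε) :
    truncatedIntegral μ K (subLocalValue f x τ) x ε = truncatedIntegral μ K f x ε := by
  have := FiniteDimensional.proper_real E
  rw [subLocalValue, hK.truncatedIntegral_sub hf (integrable_indicator_closedBall x τ (f x)) x hε,
    truncatedIntegral_indicator_closedBall hK.odd, sub_zero]

lemma ae_norm_subLocalValue_smul_le (hK : IsOddSingularKernel μ K C)
    (hG : ∀ y, ‖y‖ ≤ τ → |f (x + y) - f x| ≤ G * ‖y‖) :
    ∀ᵐ y ∂μ.restrict (norm ⁻¹' Iic τ),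
      ‖subLocalValue f x τ (x + y) • K y‖ ≤ G * C / ‖y‖ ^ (finrank ℝ E - 1) := by
  filter_upwards [ae_restrict_mem (measurable_norm measurableSet_Iic),
    ae_restrict_of_ae (compl_mem_ae_iff.2 (measure_singleton (0 : E)))] with y hy hy0
  rw [subLocalValue_of_norm_le f x hy]
  exact hK.norm_sub_smul_le hy0 (hG y hy)

lemma integrable_subLocalValue_smul (hK : IsOddSingularKernel μ K C) (hf : Integrable f μ)
    (hτ : 0 < τ) (hG : ∀ y, ‖y‖ ≤ τ → |f (x + y) - f x| ≤ G * ‖y‖) :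
    Integrable (fun y => subLocalValue f x τ (x + y) • K y) μ := by
  have := FiniteDimensional.proper_real E
  have hsub : Integrable (subLocalValue f x τ) μ :=
    hf.sub (integrable_indicator_closedBall x τ (f x))
  have hnear : IntegrableOn (fun y => subLocalValue f x τ (x + y) • K y) (norm ⁻¹' Iic τ) μ :=
    (integrableOn_norm_preimage_Iic_div_norm_pow μ (G * C) τ).mono'
      ((hsub.comp_add_left x).aestronglyMeasurable.smul hK.aestronglyMeasurable).restrict
      (hK.ae_norm_subLocalValue_smul_le hG)
  rw [← integrableOn_univ, ← preimage_univ (f := norm), ← Iic_union_Ioi (a := τ), preimage_union]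
  exact hnear.union (hK.integrableOn_smul hsub x hτ)

lemma tendsto_truncatedIntegral (hK : IsOddSingularKernel μ K C) (hf : Integrable f μ)
    (hτ : 0 < τ) (hG : ∀ y, ‖y‖ ≤ τ → |f (x + y) - f x| ≤ G * ‖y‖) :
    Tendsto (truncatedIntegral μ K f x) (𝓝[>] 0)
      (𝓝 (∫ y, subLocalValue f x τ (x + y) • K y ∂μ)) := by
  refine (aecover_norm_preimage_Ioi.integral_tendsto_of_countably_generated
    (hK.integrable_subLocalValue_smul hf hτ hG)).congr' ?_
  filter_upwards [self_mem_nhdsWithin] with ε hε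
  exact hK.truncatedIntegral_subLocalValue hf x τ hε

lemma norm_integral_subLocalValue_smul_le (hK : IsOddSingularKernel μ K C) (hf : Integrable f μ)
    (hA : ∀ᵐ y ∂μ, |f y| ≤ A) (hG : ∀ y, ‖y‖ ≤ τ → |f (x + y) - f x| ≤ G * ‖y‖) (hτ : 0 < τ)
    (hR : τ ≤ R) :
    ‖∫ y, subLocalValue f x τ (x + y) • K y ∂μ‖ ≤
      μ.toSphere.real univ * C * (G * τ + A * Real.log (R / τ)) +
        C / R ^ finrank ℝ E * ∫ y, |f y| ∂μ := by
  have hnear : ‖∫ y in norm ⁻¹' Iic τ, subLocalValue f x τ (x + y) • K y ∂μ‖ ≤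
      μ.toSphere.real univ * (G * C * τ) := by
    rw [← setIntegral_norm_preimage_Iic_div_norm_pow μ _ hτ.le]
    exact norm_integral_le_of_norm_le (integrableOn_norm_preimage_Iic_div_norm_pow μ _ τ)
      (hK.ae_norm_subLocalValue_smul_le hG)
  have hfar : ∫ y in (norm ⁻¹' Iic τ)ᶜ, subLocalValue f x τ (x + y) • K y ∂μ =
      truncatedIntegral μ K f x τ := by
    rw [← preimage_compl, compl_Iic]
    exact hK.truncatedIntegral_subLocalValue hf x τ hτ
  rw [← integral_add_compl (measurable_norm measurableSet_Iic)
    (hK.integrable_subLocalValue_smul hf hτ hG), hfar]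
  exact (norm_add_le_of_le hnear (hK.norm_truncatedIntegral_le_log hf hA x hτ hR)).trans_eq
    (by ring)

theorem exists_tendsto_truncatedIntegral (hK : IsOddSingularKernel μ K C) (hf : Integrable f μ)
    (hA : ∀ᵐ y ∂μ, |f y| ≤ A) (hG : ∀ y, |f (x + y) - f x| ≤ G * ‖y‖) :
    ∃ L : V, Tendsto (truncatedIntegral μ K f x) (𝓝[>] 0) (𝓝 L) ∧
      ∀ τ R, 0 < τ → τ ≤ R →
        ‖L‖ ≤ μ.toSphere.real univ * C * (G * τ + A * Real.log (R / τ)) +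
          C / R ^ finrank ℝ E * ∫ y, |f y| ∂μ := by
  have hlim : ∀ τ, 0 < τ → Tendsto (truncatedIntegral μ K f x) (𝓝[>] 0)
      (𝓝 (∫ y, subLocalValue f x τ (x + y) • K y ∂μ)) := fun τ hτ =>
    hK.tendsto_truncatedIntegral hf hτ fun y _ => hG y
  refine ⟨_, hlim 1 one_pos, fun τ R hτ hR => ?_⟩
  rw [tendsto_nhds_unique (hlim 1 one_pos) (hlim τ hτ)]
  exact hK.norm_integral_subLocalValue_smul_le hf hA (fun y _ => hG y) hτ hR

end IsOddSingularKernel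

section Plane

open Complex Module

lemma abs_fderiv_le_e2_grad2_mul (θ : ℝ × ℝ → ℝ) (z v : ℝ × ℝ) :
    |fderiv ℝ θ z v| ≤ e2 (grad2 θ z) * e2 v := by
  have hv : v = v.1 • v1 + v.2 • v2 := by ext <;> simp [v1, v2]
  have hcoord : fderiv ℝ θ z v = v.1 * pd θ v1 z + v.2 * pd θ v2 z := by
    conv_lhs => rw [hv]
    simp [pd]
  rw [hcoord, e2, e2, ← Real.sqrt_mul (by positivity)]
  apply Real.abs_le_sqrt
  simp only [grad2]
  linear_combination sq_nonneg (v.1 * pd θ v2 z - v.2 * pd θ v1 z)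

lemma abs_sub_le_of_e2_grad2_le {θ : ℝ × ℝ → ℝ} {G : ℝ} (hθ : Differentiable ℝ θ)
    (hG : ∀ y, e2 (grad2 θ y) ≤ G) (x y : ℝ × ℝ) : |θ (x + y) - θ x| ≤ G * e2 y := by
  have hderiv : ∀ t ∈ Icc (0 : ℝ) 1,
      HasDerivWithinAt (fun t : ℝ => θ (x + t • y)) (fderiv ℝ θ (x + t • y) y) (Icc 0 1) t := by
    intro t _
    have hline : HasDerivAt (fun t : ℝ => x + t • y) y t := by
      simpa using ((hasDerivAt_id t).smul_const y).const_add x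
    exact ((hθ _).hasFDerivAt.comp_hasDerivAt t hline).hasDerivWithinAt
  have hbound : ∀ t ∈ Ico (0 : ℝ) 1, ‖fderiv ℝ θ (x + t • y) y‖ ≤ G * e2 y := fun t _ =>
    (abs_fderiv_le_e2_grad2_mul θ _ y).trans <|
      mul_le_mul_of_nonneg_right (hG _) (Real.sqrt_nonneg _)
  simpa using norm_image_sub_le_of_norm_deriv_le_segment_01' hderiv hbound

lemma e2_equivRealProdCLM (z : ℂ) : e2 (equivRealProdCLM z) = ‖z‖ := by
  rw [Complex.norm_eq_sqrt_sq_add_sq]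
  rfl

/-- The kernel `y^⊥ / |y|³` of the quasi-geostrophic velocity, with `ℝ²` identified with `ℂ` so that
`y^⊥ = i y` and the norm is Euclidean. -/
def velocityKernel (z : ℂ) : ℂ := (‖z‖ ^ 3)⁻¹ • (I * z)

lemma isOddSingularKernel_velocityKernel : IsOddSingularKernel volume velocityKernel 1 where
  aestronglyMeasurable := by
    unfold velocityKernel
    exact Measurable.aestronglyMeasurable (by fun_prop)
  odd z := by simp [velocityKernel]
  norm_le z := by
    rcases eq_or_ne z 0 with rfl | hz
    · simp [velocityKernel]
    · have hz0 : ‖z‖ ≠ 0 := norm_ne_zero_iff.2 hz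
      apply Eq.le
      calc ‖velocityKernel z‖ = (‖z‖ ^ 3)⁻¹ * ‖z‖ := by simp [velocityKernel]
        _ = 1 / ‖z‖ ^ finrank ℝ ℂ := by
          rw [finrank_real_complex]
          field_simp

lemma equivRealProdCLM_smul_velocityKernel (c : ℝ) (z : ℂ) :
    equivRealProdCLM (c • velocityKernel z) =
      (c / e2 (equivRealProdCLM z) ^ 3) • perp (equivRealProdCLM z) := by
  rw [e2_equivRealProdCLM, velocityKernel, smul_smul, ← div_eq_mul_inv, map_smul]
  congr 1
  simp [perp]

lemma toSphere_real_univ_complex : (volume : Measure ℂ).toSphere.real univ = 2 * Real.pi := by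
  simp [measureReal_def, finrank_real_complex, Complex.volume_ball]

lemma equivRealProdCLM_preimage_lt_e2 (ε : ℝ) :
    equivRealProdCLM ⁻¹' {y | ε < e2 y} = norm ⁻¹' Ioi ε := by
  ext z
  rw [mem_preimage, mem_ofPred_eq, e2_equivRealProdCLM, mem_preimage, mem_Ioi]

lemma measurePreserving_equivRealProdCLM : MeasurePreserving equivRealProdCLM :=
  Complex.volume_preserving_equiv_real_prod

lemma integrableOn_e2_iff {F : Type*} [NormedAddCommGroup F] {g : ℝ × ℝ → F} {ε : ℝ} :
    IntegrableOn g {y | ε < e2 y} ↔ IntegrableOn (g ∘ equivRealProdCLM) (norm ⁻¹' Ioi ε) := by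
  rw [← equivRealProdCLM_preimage_lt_e2]
  exact (measurePreserving_equivRealProdCLM.integrableOn_comp_preimage
    measurableEquivRealProd.measurableEmbedding).symm

lemma smul_perp_comp_equivRealProdCLM (θ : ℝ × ℝ → ℝ) (x : ℝ × ℝ) (z : ℂ) :
    (θ (x + equivRealProdCLM z) / e2 (equivRealProdCLM z) ^ 3) • perp (equivRealProdCLM z) =
      equivRealProdCLM
        ((θ ∘ equivRealProdCLM) (equivRealProdCLM.symm x + z) • velocityKernel z) := by
  rw [equivRealProdCLM_smul_velocityKernel, Function.comp_apply, map_add,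
    ContinuousLinearEquiv.apply_symm_apply]

lemma integrableOn_smul_perp {θ : ℝ × ℝ → ℝ} (hθ : Integrable θ) (x : ℝ × ℝ) {ε : ℝ}
    (hε : 0 < ε) :
    IntegrableOn (fun y => (θ (x + y) / e2 y ^ 3) • perp y) {y | ε < e2 y} := by
  rw [integrableOn_e2_iff]
  simp only [Function.comp_def, smul_perp_comp_equivRealProdCLM]
  exact equivRealProdCLM.toContinuousLinearMap.integrable_comp <|
    isOddSingularKernel_velocityKernel.integrableOn_smul
      (measurePreserving_equivRealProdCLM.integrable_comp_of_integrable hθ) _ hε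

lemma setIntegral_smul_perp (θ : ℝ × ℝ → ℝ) (x : ℝ × ℝ) (ε : ℝ) :
    ∫ y in {y | ε < e2 y}, (θ (x + y) / e2 y ^ 3) • perp y =
      equivRealProdCLM (truncatedIntegral volume velocityKernel (θ ∘ equivRealProdCLM)
        (equivRealProdCLM.symm x) ε) := by
  rw [truncatedIntegral, ← ContinuousLinearEquiv.integral_comp_comm,
    ← equivRealProdCLM_preimage_lt_e2,
    ← measurePreserving_equivRealProdCLM.setIntegral_preimage_emb
      measurableEquivRealProd.measurableEmbedding]
  simp only [smul_perp_comp_equivRealProdCLM]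

theorem exists_tendsto_setIntegral_smul_perp {θ : ℝ × ℝ → ℝ} {A G : ℝ} {x : ℝ × ℝ}
    (hθ : Integrable θ) (hA : ∀ᵐ y, |θ y| ≤ A) (hG : ∀ y, |θ (x + y) - θ x| ≤ G * e2 y) :
    ∃ L : ℝ × ℝ,
      Tendsto (fun ε => ∫ y in {y | ε < e2 y}, (θ (x + y) / e2 y ^ 3) • perp y) (𝓝[>] 0) (𝓝 L) ∧
      ∀ τ R, 0 < τ → τ ≤ R →
        e2 L ≤ 2 * Real.pi * (G * τ + A * Real.log (R / τ)) + (∫ y, |θ y|) / R ^ 2 := by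
  have hmp := measurePreserving_equivRealProdCLM
  obtain ⟨L, hL, hbound⟩ := isOddSingularKernel_velocityKernel.exists_tendsto_truncatedIntegral
    (f := θ ∘ equivRealProdCLM) (x := equivRealProdCLM.symm x) (G := G)
    (hmp.integrable_comp_of_integrable hθ) (hmp.quasiMeasurePreserving.ae hA) fun z => by
      rw [Function.comp_apply, Function.comp_apply, map_add,
        ContinuousLinearEquiv.apply_symm_apply, ← e2_equivRealProdCLM]
      exact hG (equivRealProdCLM z)
  have hL1 : ∫ z, |(θ ∘ equivRealProdCLM) z| = ∫ y, |θ y| :=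
    hmp.integral_comp measurableEquivRealProd.measurableEmbedding fun y => |θ y|
  refine ⟨equivRealProdCLM L, ?_, fun τ R hτ hR => ?_⟩
  · simp only [setIntegral_smul_perp]
    exact (equivRealProdCLM.continuous.tendsto L).comp hL
  · rw [e2_equivRealProdCLM]
    refine (hbound τ R hτ hR).trans_eq ?_
    rw [toSphere_real_univ_complex, hL1, finrank_real_complex]
    ring

theorem velocity_principal_value_general (A D : ℝ) :
    ∃ C₁ C₂ : ℝ, 0 < C₁ ∧ 0 < C₂ ∧
      ∀ (θ : ℝ × ℝ → ℝ) (G : ℝ) (x : ℝ × ℝ),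
        Integrable θ →
        (∀ᵐ y, |θ y| ≤ A) →
        (∫ y, |θ y|) ≤ D →
        (∀ y, |θ (x + y) - θ x| ≤ G * e2 y) →
        (∀ ε : ℝ, 0 < ε →
          IntegrableOn (fun y => (θ (x + y) / (e2 y) ^ 3) • perp y) {y : ℝ × ℝ | ε < e2 y}) ∧
        ∃ L : ℝ × ℝ,
          Tendsto (fun ε : ℝ =>
              ∫ y in {y : ℝ × ℝ | ε < e2 y}, (θ (x + y) / (e2 y) ^ 3) • perp y)
            (𝓝[>] 0) (𝓝 L) ∧
          ∀ τ : ℝ, 0 < τ → τ < 1 →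
            e2 L ≤ C₁ * τ * G + C₂ * (1 + Real.log (1 / τ)) := by
  refine ⟨2 * Real.pi, 2 * Real.pi * |A| + |D| + 1, by positivity, by positivity, ?_⟩
  intro θ G x hθ hA hD hG
  obtain ⟨L, hL, hbound⟩ := exists_tendsto_setIntegral_smul_perp hθ hA hG
  refine ⟨fun ε hε => integrableOn_smul_perp hθ x hε, L, hL, fun τ hτ hτ1 => ?_⟩
  have hlog : 0 ≤ Real.log (1 / τ) := Real.log_nonneg ((one_le_div hτ).2 hτ1.le)
  have hAlog : A * Real.log (1 / τ) ≤ |A| * Real.log (1 / τ) :=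
    mul_le_mul_of_nonneg_right (le_abs_self A) hlog
  calc e2 L ≤ 2 * Real.pi * (G * τ + A * Real.log (1 / τ)) + (∫ y, |θ y|) / 1 ^ 2 :=
        hbound τ 1 hτ hτ1.le
    _ ≤ 2 * Real.pi * (G * τ + |A| * Real.log (1 / τ)) + |D| := by
        rw [one_pow, div_one]
        gcongr
        exact hD.trans (le_abs_self D)
    _ ≤ 2 * Real.pi * τ * G + (2 * Real.pi * |A| + |D| + 1) * (1 + Real.log (1 / τ)) := by
        have : 0 ≤ 2 * Real.pi * |A| + 1 + (|D| + 1) * Real.log (1 / τ) := by positivity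
        linear_combination this

end Plane

/-- **Velocity estimate for QG.** For `θ : ℝ² → ℝ` of class `C¹`, in
`L^∞ ∩ L² ∩ L¹` with norms bounded by `A`, `B`, `D`, and with `|∇θ| ≤ G`, the principal
value `u(x) = P.V.∫ y^⊥ θ(x+y)/|y|³ dy` exists at every `x`: each truncated integral
converges absolutely, the limit as `ε → 0⁺` exists, and for constants `C₁, C₂` depending
only on `A, B, D`, one has `|u(x)| ≤ C₁ τ G + C₂ (1 + log(1/τ))` for every `τ ∈ (0,1)`. -/
theorem velocity_principal_value (A B D : ℝ) :
    ∃ C₁ C₂ : ℝ, 0 < C₁ ∧ 0 < C₂ ∧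
      ∀ θ : ℝ × ℝ → ℝ, ∀ G : ℝ,
        ContDiff ℝ 1 θ →
        (∀ y, |θ y| ≤ A) →
        Integrable (fun y => (θ y) ^ 2) →
        Real.sqrt (∫ y, (θ y) ^ 2) ≤ B →
        Integrable θ →
        (∫ y, |θ y|) ≤ D →
        (∀ y, e2 (grad2 θ y) ≤ G) →
        ∀ x : ℝ × ℝ,
          (∀ ε : ℝ, 0 < ε →
            IntegrableOn (fun y => (θ (x + y) / (e2 y) ^ 3) • perp y) {y : ℝ × ℝ | ε < e2 y}) ∧
          ∃ L : ℝ × ℝ,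
            Tendsto (fun ε : ℝ =>
                ∫ y in {y : ℝ × ℝ | ε < e2 y}, (θ (x + y) / (e2 y) ^ 3) • perp y)
              (𝓝[>] 0) (𝓝 L) ∧
            ∀ τ : ℝ, 0 < τ → τ < 1 →
              e2 L ≤ C₁ * τ * G + C₂ * (1 + Real.log (1 / τ)) := by
  obtain ⟨C₁, C₂, hC₁, hC₂, h⟩ := velocity_principal_value_general A D
  exact ⟨C₁, C₂, hC₁, hC₂, fun θ G hθ hA _ _ hint hD hG x =>
    h θ G x hint (ae_of_all _ hA) hD <|
      abs_sub_le_of_e2_grad2_le (hθ.differentiable one_ne_zero) hG x⟩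

end
end

section
/- Let C > 0, let Φ : [0,∞) → [0,∞) be continuous, and let N : [0,∞) → (0,∞) be differentiable such that for every t ≥ 0 with N(t) > e^{e^t} one has N'(t) ≤ C (e^{e^t} + Φ(t)) N(t) log N(t). Then there exists a constant c > 0, depending only on C and N(0), such that N(t) ≤ exp(exp(c(1 + ∫₀ᵗ (e^{e^s} + Φ(s)) ds))) for all t ≥ 0. -/
open Set Filter Topology

noncomputable section

/-!
The function `B = exp (exp H)` satisfies `B' = H' * (B * log B)`. With `H = c * (1 + ∫ g)` and
`C < c`, it therefore grows strictly faster than the differential inequality allows `N` to grow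
at a point where `N = B`, and such a point lies above the threshold `exp (exp t)`, because
`1 ≤ c` and `1 ≤ g` give `t ≤ ∫ g < H t`. So `N` cannot cross `B`, and it starts
below `B 0 = exp (exp c)` once `N 0 ≤ c`.
-/

section Integral

variable {a b : ℝ}

theorem const_mul_sub_le_integral {g : ℝ → ℝ} {m : ℝ} (hab : a ≤ b)
    (hg : IntervalIntegrable g MeasureTheory.volume a b) (hm : ∀ x ∈ Icc a b, m ≤ g x) :
    m * (b - a) ≤ ∫ s in a..b, g s :=
  calc
    m * (b - a) = ∫ _ in a..b, m := by
      rw [intervalIntegral.integral_const, smul_eq_mul, mul_comm]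
    _ ≤ ∫ s in a..b, g s :=
      intervalIntegral.integral_mono_on hab intervalIntegrable_const hg hm

theorem hasDerivWithinAt_integral_Icc {E : Type*} [NormedAddCommGroup E] [NormedSpace ℝ E]
    [CompleteSpace E] {g : ℝ → E} {t : ℝ} (hg : ContinuousOn g (Icc a b)) (ht : t ∈ Icc a b) :
    HasDerivWithinAt (fun u => ∫ s in a..u, g s) (g t) (Icc a b) t := by
  have : Fact (t ∈ Icc a b) := ⟨ht⟩
  exact intervalIntegral.integral_hasDerivWithinAt_right
    ((hg.mono (Icc_subset_Icc_right ht.2)).intervalIntegrable_of_Icc ht.1)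
    (hg.stronglyMeasurableAtFilter_nhdsWithin measurableSet_Icc t) (hg t ht)

end Integral

section Barrier

variable {f f' : ℝ → ℝ} {a b : ℝ}

theorem image_le_exp_exp_of_deriv_right_lt {H H' : ℝ → ℝ}
    (hf : ContinuousOn f (Icc a b)) (hf' : ∀ x ∈ Ico a b, HasDerivWithinAt f (f' x) (Ici x) x)
    (hH : ContinuousOn H (Icc a b)) (hH' : ∀ x ∈ Ico a b, HasDerivWithinAt H (H' x) (Ici x) x)
    (ha : f a ≤ Real.exp (Real.exp (H a)))
    (bound : ∀ x ∈ Ico a b, f x = Real.exp (Real.exp (H x)) →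
      f' x < H' x * (f x * Real.log (f x))) :
    ∀ ⦃x⦄, x ∈ Icc a b → f x ≤ Real.exp (Real.exp (H x)) := by
  refine image_le_of_deriv_right_lt_deriv_boundary' hf hf' ha hH.rexp.rexp
    (fun x hx => (hH' x hx).exp.exp) fun x hx h_touch => ?_
  calc
    f' x < H' x * (f x * Real.log (f x)) := bound x hx h_touch
    _ = Real.exp (Real.exp (H x)) * (Real.exp (H x) * H' x) := by
      rw [h_touch, Real.log_exp]
      ring

theorem image_le_exp_exp_integral_of_deriv_right_le {g : ℝ → ℝ} {C c : ℝ}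
    (hf : ContinuousOn f (Icc a b)) (hf' : ∀ x ∈ Ico a b, HasDerivWithinAt f (f' x) (Ici x) x)
    (hg : ContinuousOn g (Icc a b)) (hg_pos : ∀ x ∈ Ico a b, 0 < g x)
    (hCc : C < c) (hc : 1 ≤ c) (ha : f a ≤ Real.exp (Real.exp c))
    (bound : ∀ x ∈ Ico a b, Real.exp (Real.exp (∫ s in a..x, g s)) < f x →
      f' x ≤ C * g x * (f x * Real.log (f x))) :
    ∀ ⦃x⦄, x ∈ Icc a b → f x ≤ Real.exp (Real.exp (c * (1 + ∫ s in a..x, g s))) := by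
  have hG : ∀ x ∈ Icc a b,
      HasDerivWithinAt (fun x => c * (1 + ∫ s in a..x, g s)) (c * g x) (Icc a b) x :=
    fun x hx => ((hasDerivWithinAt_integral_Icc hg hx).const_add 1).const_mul c
  refine image_le_exp_exp_of_deriv_right_lt hf hf' (fun x hx => (hG x hx).continuousWithinAt)
    (fun x hx => (hG x (Ico_subset_Icc_self hx)).mono_of_mem_nhdsWithin
      (Icc_mem_nhdsGE_of_mem hx))
    (by simpa using ha) fun x hx h_touch => ?_
  have integral_nonneg : 0 ≤ ∫ s in a..x, g s :=
    intervalIntegral.integral_nonneg hx.1 fun s hs => (hg_pos s ⟨hs.1, hs.2.trans_lt hx.2⟩).le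
  have above_threshold : Real.exp (Real.exp (∫ s in a..x, g s)) < f x := by
    rw [h_touch, Real.exp_lt_exp, Real.exp_lt_exp]
    calc
      ∫ s in a..x, g s < 1 + ∫ s in a..x, g s := lt_one_add _
      _ ≤ c * (1 + ∫ s in a..x, g s) := le_mul_of_one_le_left (by positivity) hc
  have mul_log_pos : 0 < f x * Real.log (f x) := by
    rw [h_touch, Real.log_exp]
    positivity
  calc
    f' x ≤ C * g x * (f x * Real.log (f x)) := bound x hx above_threshold
    _ < c * g x * (f x * Real.log (f x)) := by
      have := hg_pos x hx
      gcongr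

end Barrier

theorem double_exponential_gronwall_general (C N₀ : ℝ) :
    ∃ c : ℝ, 0 < c ∧
      ∀ g N N' : ℝ → ℝ,
        ContinuousOn g (Ici 0) →
        (∀ t ∈ Ici (0 : ℝ), 1 ≤ g t) →
        N 0 ≤ N₀ →
        ContinuousOn N (Ici 0) →
        (∀ t ∈ Ici (0 : ℝ), HasDerivWithinAt N (N' t) (Ici t) t) →
        (∀ t ∈ Ici (0 : ℝ), Real.exp (Real.exp t) < N t →
          N' t ≤ C * g t * (N t * Real.log (N t))) →
        ∀ t ∈ Ici (0 : ℝ), N t ≤ Real.exp (Real.exp (c * (1 + ∫ s in (0 : ℝ)..t, g s))) := by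
  obtain ⟨c, hCc, hN₀c, hc⟩ : ∃ c, C < c ∧ N₀ ≤ c ∧ 1 ≤ c :=
    ((eventually_gt_atTop C).and ((eventually_ge_atTop N₀).and (eventually_ge_atTop 1))).exists
  refine ⟨c, by linarith, fun g N N' hg hg_one hN_zero hN hN' bound T hT => ?_⟩
  have initial : N 0 ≤ Real.exp (Real.exp c) := by
    linarith [Real.add_one_le_exp c, Real.add_one_le_exp (Real.exp c)]
  have le_integral : ∀ t, 0 ≤ t → t ≤ ∫ s in (0 : ℝ)..t, g s := fun t ht => by
    simpa using const_mul_sub_le_integral ht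
      ((hg.mono Icc_subset_Ici_self).intervalIntegrable_of_Icc ht) fun s hs => hg_one s hs.1
  refine image_le_exp_exp_integral_of_deriv_right_le (hN.mono Icc_subset_Ici_self)
    (fun t ht => hN' t ht.1) (hg.mono Icc_subset_Ici_self)
    (fun t ht => zero_lt_one.trans_le (hg_one t ht.1)) hCc hc initial
    (fun t ht h_above => bound t ht.1 (h_above.trans_le' ?_)) (right_mem_Icc.2 hT)
  gcongr
  exact le_integral t ht.1

/-- **Gronwall-type lemma for the double-exponential bound.** Let `C > 0`, let
`Φ : [0,∞) → [0,∞)` be continuous, and let `N : [0,∞) → (0,∞)` be differentiable with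
`N'(t) ≤ C (e^{eᵗ} + Φ(t)) N(t) log N(t)` whenever `N(t) > e^{eᵗ}`. Then there is a
constant `c > 0`, depending only on `C` and `N(0)`, such that
`N(t) ≤ exp(exp(c(1 + ∫₀ᵗ (e^{eˢ} + Φ(s)) ds)))` for all `t ≥ 0`. -/
theorem double_exponential_gronwall (C N₀ : ℝ) (hC : 0 < C) (hN₀ : 0 < N₀) :
    ∃ c : ℝ, 0 < c ∧
      ∀ Φ N N' : ℝ → ℝ,
        ContinuousOn Φ (Ici 0) →
        (∀ t ∈ Ici (0 : ℝ), 0 ≤ Φ t) →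
        (∀ t ∈ Ici (0 : ℝ), 0 < N t) →
        N 0 = N₀ →
        (∀ t ∈ Ici (0 : ℝ), HasDerivWithinAt N (N' t) (Ici 0) t) →
        (∀ t ∈ Ici (0 : ℝ), Real.exp (Real.exp t) < N t →
          N' t ≤ C * (Real.exp (Real.exp t) + Φ t) * (N t * Real.log (N t))) →
        ∀ t ∈ Ici (0 : ℝ),
          N t ≤ Real.exp (Real.exp (c * (1 + ∫ s in (0 : ℝ)..t, (Real.exp (Real.exp s) + Φ s)))) := by
  obtain ⟨c, hc, h⟩ := double_exponential_gronwall_general C N₀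
  exact ⟨c, hc, fun Φ N N' hΦ hΦ_nonneg _ hN_zero hN' bound =>
    h _ N N' (by fun_prop)
      (fun t ht => le_add_of_le_of_nonneg (Real.one_le_exp (Real.exp_pos t).le) (hΦ_nonneg t ht))
      hN_zero.le (fun t ht => (hN' t ht).continuousWithinAt)
      (fun t ht => (hN' t ht).mono (Ici_subset_Ici.2 ht)) bound⟩

end
end

section
/- Let ω : ℝ² → ℝ be measurable with ω ∈ L¹(ℝ²) ∩ L^∞(ℝ²). Let p, q ∈ ℝ² with 0 < |p − q| ≤ 1. Then the function y ↦ ω(y)(log|y − p| − log|y − q|) is absolutely integrable on ℝ², and |∫_{ℝ²} ω(y)(log|y − p| − log|y − q|) dy| ≤ K |p − q|, where K depends only on ‖ω‖_{L¹} and ‖ω‖_{L^∞}. -/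
open MeasureTheory Set

noncomputable section

/-!
The elementary bound `|log a - log b| ≤ |a - b| (a⁻¹ + b⁻¹)` and the triangle inequality give
`|log |y - p| - log |y - q|| ≤ |p - q| (|y - p|⁻¹ + |y - q|⁻¹)`, so it suffices to bound
`∫ |y - p|⁻¹ |ω y| dy` uniformly in `p`. Near `p` the kernel is integrable because the dimension is
at least two, and `ω` is bounded; away from `p` the kernel is at most `1`, and `ω` is integrable.
-/

lemma log_sub_log_le_abs_sub_mul_inv {a b : ℝ} (ha : 0 < a) (hb : 0 < b) :
    Real.log a - Real.log b ≤ |a - b| * b⁻¹ :=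
  calc
    Real.log a - Real.log b = Real.log (a / b) := (Real.log_div ha.ne' hb.ne').symm
    _ ≤ a / b - 1 := Real.log_le_sub_one_of_pos (div_pos ha hb)
    _ = (a - b) * b⁻¹ := by field_simp
    _ ≤ |a - b| * b⁻¹ := by gcongr; exact le_abs_self _

lemma abs_log_sub_log_le_abs_sub_mul_inv_add_inv {a b : ℝ} (ha : 0 < a) (hb : 0 < b) :
    |Real.log a - Real.log b| ≤ |a - b| * (a⁻¹ + b⁻¹) := by
  have hab := log_sub_log_le_abs_sub_mul_inv ha hb
  have hba := log_sub_log_le_abs_sub_mul_inv hb ha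
  rw [abs_sub_comm b a] at hba
  have ha' : 0 ≤ |a - b| * a⁻¹ := by positivity
  have hb' : 0 ≤ |a - b| * b⁻¹ := by positivity
  rw [mul_add, abs_le]
  constructor <;> linarith

lemma abs_log_seminorm_sub_log_seminorm_le {V : Type*} [AddCommGroup V] [Module ℝ V]
    (N : Seminorm ℝ V) {x y : V} (hx : N x ≠ 0) (hy : N y ≠ 0) :
    |Real.log (N x) - Real.log (N y)| ≤ N (x - y) * ((N x)⁻¹ + (N y)⁻¹) := by
  have hx' : 0 < N x := (apply_nonneg N x).lt_of_ne' hx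
  have hy' : 0 < N y := (apply_nonneg N y).lt_of_ne' hy
  refine (abs_log_sub_log_le_abs_sub_mul_inv_add_inv hx' hy').trans ?_
  gcongr
  exact abs_sub_map_le_sub N x y

lemma ae_norm_log_seminorm_sub_smul_le {V F : Type*} [NormedAddCommGroup V] [NormedSpace ℝ V]
    [MeasurableSpace V] (μ : Measure V) [NullSingletonClass μ] [NormedAddCommGroup F]
    [NormedSpace ℝ F] (N : Seminorm ℝ V) {C : ℝ} (hC : 0 < C) (hN : ∀ x, ‖x‖ ≤ C * N x)
    (ω : V → F) (p q : V) :
    ∀ᵐ y ∂μ, ‖(Real.log (N (y - p)) - Real.log (N (y - q))) • ω y‖ ≤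
      C * N (p - q) * (‖y - p‖⁻¹ * ‖ω y‖ + ‖y - q‖⁻¹ * ‖ω y‖) := by
  have hpos {x : V} (hx : x ≠ 0) : 0 < N x :=
    pos_of_mul_pos_right ((norm_pos_iff.2 hx).trans_le (hN x)) hC.le
  have hinv {x : V} (hx : x ≠ 0) : (N x)⁻¹ ≤ C * ‖x‖⁻¹ := by
    rw [← div_eq_mul_inv, inv_le_comm₀ (hpos hx) (by positivity), inv_div, div_le_iff₀' hC]
    exact hN x
  filter_upwards [Measure.ae_ne μ p, Measure.ae_ne μ q] with y hp hq
  have hp' := sub_ne_zero.2 hp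
  have hq' := sub_ne_zero.2 hq
  have hlog := abs_log_seminorm_sub_log_seminorm_le N (hpos hp').ne' (hpos hq').ne'
  rw [sub_sub_sub_cancel_left, map_sub_rev N q p] at hlog
  rw [norm_smul, Real.norm_eq_abs]
  calc
    _ ≤ N (p - q) * ((N (y - p))⁻¹ + (N (y - q))⁻¹) * ‖ω y‖ := by gcongr
    _ ≤ N (p - q) * (C * ‖y - p‖⁻¹ + C * ‖y - q‖⁻¹) * ‖ω y‖ := by
      gcongr
      exacts [hinv hp', hinv hq']
    _ = _ := by ring

/-- The function `x ↦ ‖x‖⁻¹` cut off outside the open unit ball: the singular part of the kernel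
`‖x‖⁻¹`, whose remainder is bounded by `1`. -/
def truncatedInvNorm {E : Type*} [SeminormedAddCommGroup E] : E → ℝ :=
  (Metric.ball 0 1).indicator fun x => ‖x‖⁻¹

lemma inv_norm_mul_le_truncatedInvNorm_mul_add {E : Type*} [SeminormedAddCommGroup E] (x : E)
    {b B : ℝ} (hb : 0 ≤ b) (hbB : b ≤ B) : ‖x‖⁻¹ * b ≤ truncatedInvNorm x * B + b := by
  by_cases hx : x ∈ Metric.ball 0 1
  · rw [truncatedInvNorm, indicator_of_mem hx]
    exact le_add_of_le_of_nonneg (by gcongr) hb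
  · rw [truncatedInvNorm, indicator_of_notMem hx, zero_mul, zero_add]
    exact mul_le_of_le_one_left hb (inv_le_one_of_one_le₀ (by simpa using hx))

section FiniteDimensional

variable {V : Type*} [NormedAddCommGroup V] [NormedSpace ℝ V] [FiniteDimensional ℝ V]

lemma continuous_seminorm_of_finiteDimensional (N : Seminorm ℝ V) : Continuous N :=
  N.convexOn.locallyLipschitz.continuous

lemma exists_norm_le_mul_seminorm (N : Seminorm ℝ V) (hN : ∀ x, N x = 0 → x = 0) :
    ∃ C, 0 < C ∧ ∀ x, ‖x‖ ≤ C * N x := by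
  have hpos : ∀ x ∈ Metric.sphere (0 : V) 1, 0 < N x := fun x hx =>
    (apply_nonneg N x).lt_of_ne' fun h => ne_zero_of_mem_unit_sphere ⟨x, hx⟩ (hN x h)
  obtain ⟨c, hc, hcN⟩ := (isCompact_sphere (0 : V) 1).exists_forall_le'
    (continuous_seminorm_of_finiteDimensional N).continuousOn hpos
  refine ⟨c⁻¹, inv_pos.2 hc, fun x => ?_⟩
  rcases eq_or_ne x 0 with rfl | hx
  · simp
  have hx' : 0 < ‖x‖ := norm_pos_iff.2 hx
  have hunit : c ≤ ‖x‖⁻¹ * N x := by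
    simpa [map_smul_eq_mul] using hcN (‖x‖⁻¹ • x) (by simp [norm_smul, hx'.ne'])
  rwa [le_inv_mul_iff₀ hc, mul_comm, ← le_inv_mul_iff₀ hx']

variable [MeasurableSpace V] [BorelSpace V] (μ : Measure V) [μ.IsAddHaarMeasure]
  {F : Type*} [NormedAddCommGroup F] {ω : V → F} {B : ℝ}

lemma integrable_truncatedInvNorm (hV : 1 < Module.finrank ℝ V) :
    Integrable (truncatedInvNorm (E := V)) μ := by
  refine IntegrableOn.integrable_indicator ?_ Metric.isOpen_ball.measurableSet
  refine integrableOn_ball_of_norm_le_rpow (C := 1) (α := 1) hV.le (by exact_mod_cast hV)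
    (.of_forall fun x => ?_) (by fun_prop)
  simp [Real.rpow_neg_one]

lemma integrable_inv_norm_sub_mul_norm (hV : 1 < Module.finrank ℝ V)
    (hω : Integrable ω μ) (hB : ∀ᵐ y ∂μ, ‖ω y‖ ≤ B) (p : V) :
    Integrable (fun y => ‖y - p‖⁻¹ * ‖ω y‖) μ := by
  have hdom_int := (((integrable_truncatedInvNorm μ hV).comp_sub_right p).mul_const B).add hω.norm
  have hmeas : Measurable fun y : V => ‖y - p‖⁻¹ := by fun_prop
  refine hdom_int.mono' (hmeas.aestronglyMeasurable.mul hω.norm.1) ?_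
  filter_upwards [hB] with y hy
  rw [Real.norm_of_nonneg (by positivity)]
  exact inv_norm_mul_le_truncatedInvNorm_mul_add (y - p) (norm_nonneg _) hy

lemma integral_inv_norm_sub_mul_norm_le (hV : 1 < Module.finrank ℝ V)
    (hω : Integrable ω μ) (hB : ∀ᵐ y ∂μ, ‖ω y‖ ≤ B) (p : V) :
    ∫ y, ‖y - p‖⁻¹ * ‖ω y‖ ∂μ ≤ (∫ x, truncatedInvNorm x ∂μ) * B + ∫ y, ‖ω y‖ ∂μ := by
  have hnear_int := ((integrable_truncatedInvNorm μ hV).comp_sub_right p).mul_const B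
  calc
    _ ≤ ∫ y, (truncatedInvNorm (y - p) * B + ‖ω y‖) ∂μ := by
      refine integral_mono_ae (integrable_inv_norm_sub_mul_norm μ hV hω hB p)
        (hnear_int.add hω.norm) ?_
      filter_upwards [hB] with y hy
      exact inv_norm_mul_le_truncatedInvNorm_mul_add (y - p) (norm_nonneg _) hy
    _ = _ := by
      rw [integral_add hnear_int hω.norm, integral_mul_const,
        integral_sub_right_eq_self truncatedInvNorm p]

theorem log_stream_function_difference_bound_general [NormedSpace ℝ F]
    (hV : 1 < Module.finrank ℝ V) (N : Seminorm ℝ V) (hN : ∀ x, N x = 0 → x = 0) (A B : ℝ) :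
    ∃ K : ℝ, 0 < K ∧
      ∀ ω : V → F, Integrable ω μ → ∫ y, ‖ω y‖ ∂μ ≤ A → (∀ᵐ y ∂μ, ‖ω y‖ ≤ B) →
        ∀ p q : V,
          Integrable (fun y => (Real.log (N (y - p)) - Real.log (N (y - q))) • ω y) μ ∧
          ‖∫ y, (Real.log (N (y - p)) - Real.log (N (y - q))) • ω y ∂μ‖ ≤ K * N (p - q) := by
  have : Nontrivial V := Module.nontrivial_of_finrank_pos (R := ℝ) (by lia)
  obtain ⟨C, hC, hCN⟩ := exists_norm_le_mul_seminorm N hN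
  set M := (∫ x, truncatedInvNorm x ∂μ) * B + A
  refine ⟨C * (2 * |M|) + 1, by positivity, fun ω hω hA hB p q => ?_⟩
  have hp_int := integrable_inv_norm_sub_mul_norm μ hV hω hB p
  have hp_le := integral_inv_norm_sub_mul_norm_le μ hV hω hB p
  have hq_int := integrable_inv_norm_sub_mul_norm μ hV hω hB q
  have hq_le := integral_inv_norm_sub_mul_norm_le μ hV hω hB q
  have hdom := ae_norm_log_seminorm_sub_smul_le μ N hC hCN ω p q
  have hdom_int := (hp_int.add hq_int).const_mul (C * N (p - q))
  have hN_meas := (continuous_seminorm_of_finiteDimensional N).measurable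
  have hlog_meas : Measurable fun y => Real.log (N (y - p)) - Real.log (N (y - q)) := by fun_prop
  refine ⟨hdom_int.mono' (hlog_meas.aestronglyMeasurable.smul hω.1) hdom, ?_⟩
  have hM : M ≤ |M| := le_abs_self M
  calc
    _ ≤ ∫ y, C * N (p - q) * (‖y - p‖⁻¹ * ‖ω y‖ + ‖y - q‖⁻¹ * ‖ω y‖) ∂μ :=
      norm_integral_le_of_norm_le hdom_int hdom
    _ = C * N (p - q) *
        (∫ y, ‖y - p‖⁻¹ * ‖ω y‖ ∂μ + ∫ y, ‖y - q‖⁻¹ * ‖ω y‖ ∂μ) := by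
      rw [integral_const_mul, integral_add hp_int hq_int]
    _ ≤ C * N (p - q) * (2 * |M|) := by gcongr; linarith
    _ ≤ (C * (2 * |M|) + 1) * N (p - q) := by linarith [apply_nonneg N (p - q)]

end FiniteDimensional

/-- The Euclidean norm `e2` bundled as a seminorm on `ℝ × ℝ`, obtained by pulling back the norm
of `ℂ`, since the norm instance on `ℝ × ℝ` is the sup norm. -/
def e2Seminorm : Seminorm ℝ (ℝ × ℝ) :=
  (normSeminorm ℝ ℂ).comp Complex.equivRealProdLm.symm.toLinearMap

lemma e2Seminorm_apply (y : ℝ × ℝ) : e2Seminorm y = e2 y := by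
  simp [e2Seminorm, e2, Complex.equivRealProdLm_symm_apply, Complex.norm_add_mul_I]

lemma eq_zero_of_e2Seminorm_eq_zero (y : ℝ × ℝ) (hy : e2Seminorm y = 0) : y = 0 := by
  simpa [e2Seminorm] using hy

/-- **Euler analogue of Lemma 1.** Let `ω : ℝ² → ℝ` be measurable and in `L¹ ∩ L^∞`,
with `‖ω‖_{L¹} ≤ A` and `‖ω‖_∞ ≤ B`. Then there is a constant `K` depending only on `A`
and `B` such that for all `p, q ∈ ℝ²` with `0 < |p − q| ≤ 1`, the function
`y ↦ ω(y)(log|y−p| − log|y−q|)` is absolutely integrable and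
`|∫ ω(y)(log|y−p| − log|y−q|) dy| ≤ K |p − q|`. -/
theorem log_stream_function_difference_bound (A B : ℝ) :
    ∃ K : ℝ, 0 < K ∧
      ∀ ω : ℝ × ℝ → ℝ, Measurable ω →
        Integrable ω →
        (∫ y, |ω y|) ≤ A →
        (∀ y, |ω y| ≤ B) →
        ∀ p q : ℝ × ℝ, 0 < e2 (p - q) → e2 (p - q) ≤ 1 →
          Integrable (fun y => ω y * (Real.log (e2 (y - p)) - Real.log (e2 (y - q)))) ∧
          |∫ y, ω y * (Real.log (e2 (y - p)) - Real.log (e2 (y - q)))| ≤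
            K * e2 (p - q) := by
  obtain ⟨K, hK, hbound⟩ := log_stream_function_difference_bound_general (F := ℝ)
    (volume : Measure (ℝ × ℝ)) (by simp) e2Seminorm eq_zero_of_e2Seminorm_eq_zero A B
  simp only [e2Seminorm_apply, smul_eq_mul, mul_comm (Real.log _ - _)] at hbound
  exact ⟨K, hK, fun ω _ hω hA hB p q _ _ => hbound ω hω hA (.of_forall hB) p q⟩

end
end
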